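/- Under the same hypotheses (α ∈ (1/3,1/2), c₁,c₂ > 0, |c₁−c₂| = 1, q_n = n^α, b_n = n^α c_n with c-periodic of period 2, I a bounded interval of ℝ₊), the Poincaré coefficient G_n(λ) = (q_{2n+2}−λ)b_{2n-1}b_{2n}/((q_{2n}−λ)b_{2n+1}b_{2n+2}) satisfies the uniform expansion G_n(λ) = 1 − α/n + Õ_I(n^{-1-α}) as n → ∞. -/

import Mathlib

/-- Uniform big-O on `I`: `r_n(λ) = Õ_I(h_n)`. -/
def OtildeI (I : Set ℝ) (r : ℕ → ℝ → ℝ) (h : ℕ → ℝ) : Prop :=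
  ∃ C > (0 : ℝ), ∃ N : ℕ, ∀ n > N, ∀ t ∈ I, |r n t| ≤ C * |h n|

/-- The 2-periodically modulated weights `b_n = n^α c_n`, `c_{2n-1} = c₁`, `c_{2n} = c₂`. -/
noncomputable def jacobiWeight (α c₁ c₂ : ℝ) (n : ℕ) : ℝ :=
  (n : ℝ) ^ α * (if Odd n then c₁ else c₂)

/-- The diagonal `q_n = n^α`. -/
noncomputable def jacobiDiag (α : ℝ) (n : ℕ) : ℝ := (n : ℝ) ^ α

/-- The Poincaré coefficient `G_n(λ)`. -/
noncomputable def jacobiG (b q : ℕ → ℝ) (n : ℕ) (t : ℝ) : ℝ :=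
  (q (2 * n + 2) - t) * b (2 * n - 1) * b (2 * n) /
    ((q (2 * n) - t) * b (2 * n + 1) * b (2 * n + 2))

/-! The weights only enter through `b_{2n-1} b_{2n} / (b_{2n+1} b_{2n+2})`, where the periodic
factors cancel. With `x = 2n` this leaves
`G_n(t) = (1 - t (x + 2)^(-α)) / (1 - t x^(-α)) * ((x - 1) / (x + 1))^α`.
The first factor differs from `1` by `t (x^(-α) - (x + 2)^(-α)) / (1 - t x^(-α))`. For bounded `t`
the denominator tends to `1` uniformly, and the increment of `x^(-α)` is `O(x^(-1-α))`, the order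
of its derivative. The second factor is `1 - 2α / x + O(x^(-2))`, and `x^(-2) ≤ x^(-1-α)` for
`α ≤ 1` and `x ≥ 1`. -/

open Asymptotics Filter Topology

theorem otildeI_iff_isBigO {I : Set ℝ} {r : ℕ → ℝ → ℝ} {h : ℕ → ℝ} :
    OtildeI I r h ↔ (fun p : ℕ × ℝ => r p.1 p.2) =O[atTop ×ˢ 𝓟 I] fun p => h p.1 := by
  simp only [OtildeI, isBigO_iff', eventually_prod_principal_iff, Real.norm_eq_abs,
    atTop_basis_Ioi.eventually_iff, Set.mem_Ioi, true_and, gt_iff_lt]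

theorem isBigO_sub_linearization_of_analyticAt {𝕜 E : Type*} [NontriviallyNormedField 𝕜]
    [NormedAddCommGroup E] [NormedSpace 𝕜 E] {f : 𝕜 → E} {f' : E} {x : 𝕜}
    (hf : AnalyticAt 𝕜 f x) (hf' : HasDerivAt f f' x) :
    (fun y => f (x + y) - (f x + y • f')) =O[𝓝 0] fun y => y ^ 2 := by
  obtain ⟨p, hp⟩ := hf
  have hpartial (y : 𝕜) : p.partialSum 2 y = f x + y • f' := by
    have hzero : p.coeff 0 = f x := hp.coeff_zero 1
    simp [FormalMultilinearSeries.partialSum, Finset.sum_range_succ, hzero,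
      hf'.unique hp.hasDerivAt]
  simpa only [hpartial, ← norm_pow, isBigO_norm_right] using hp.isBigO_sub_partialSum_pow 2

theorem isBigO_rpow_rpow_atTop_of_le {r s : ℝ} (hrs : r ≤ s) :
    (fun x : ℝ => x ^ r) =O[atTop] fun x => x ^ s := by
  refine .of_bound' ?_
  filter_upwards [eventually_ge_atTop 1] with x hx
  have hx₀ : 0 ≤ x := by positivity
  simpa only [Real.norm_of_nonneg (Real.rpow_nonneg hx₀ _)] using
    Real.rpow_le_rpow_of_exponent_le hx hrs

theorem isBigO_add_rpow_sub_rpow (a s : ℝ) :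
    (fun x : ℝ => (x + a) ^ s - x ^ s) =O[atTop] fun x => x ^ (s - 1) := by
  have hderiv : HasDerivAt (fun u : ℝ => (1 + a * u) ^ s) (a * s) 0 := by
    simpa using (((hasDerivAt_id (0 : ℝ)).const_mul a).const_add 1).rpow_const (p := s)
      (Or.inl (by simp))
  have hlin : (fun x : ℝ => (1 + a * x⁻¹) ^ s - 1) =O[atTop] fun x => x⁻¹ := by
    simpa [Function.comp_def] using hderiv.isBigO_sub.comp_tendsto tendsto_inv_atTop_zero
  refine ((isBigO_refl (fun x : ℝ => x ^ s) atTop).mul hlin).congr' ?_ ?_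
  · filter_upwards [eventually_gt_atTop 0, eventually_ge_atTop (-a)] with x hx hxa
    have hfactor : x + a = x * (1 + a * x⁻¹) := by field_simp
    have hnonneg : 0 ≤ 1 + a * x⁻¹ := by
      rw [← mul_nonneg_iff_of_pos_left hx, ← hfactor]
      linarith
    rw [hfactor, Real.mul_rpow hx.le hnonneg]
    ring
  · filter_upwards [eventually_gt_atTop 0] with x hx
    rw [Real.rpow_sub_one hx.ne', div_eq_mul_inv]

theorem isBigO_add_div_add_rpow_sub (a b s : ℝ) :
    (fun x : ℝ => ((x + a) / (x + b)) ^ s - (1 + s * (a - b) / x))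
      =O[atTop] fun x => x ^ (-2 : ℝ) := by
  have hanalytic : AnalyticAt ℝ (fun u : ℝ => ((1 + a * u) / (1 + b * u)) ^ s) 0 := by
    refine ContDiffAt.analyticAt (.rpow_const_of_ne (.div ?_ ?_ (by simp)) (by simp)) <;> fun_prop
  have hderiv : HasDerivAt (fun u : ℝ => ((1 + a * u) / (1 + b * u)) ^ s) (s * (a - b)) 0 := by
    have hlin (c : ℝ) : HasDerivAt (fun u : ℝ => 1 + c * u) c 0 := by
      simpa using ((hasDerivAt_id (0 : ℝ)).const_mul c).const_add 1
    simpa [mul_comm] using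
      ((hlin a).fun_div (hlin b) (by simp)).rpow_const (p := s) (Or.inl (by simp))
  refine ((isBigO_sub_linearization_of_analyticAt hanalytic hderiv).comp_tendsto
    tendsto_inv_atTop_zero).congr' ?_ ?_
  · filter_upwards [eventually_gt_atTop 0] with x hx
    have hdiv : (1 + a * x⁻¹) / (1 + b * x⁻¹) = (x + a) / (x + b) := by
      rw [← mul_div_mul_left _ _ hx.ne']
      field_simp
    simp only [Function.comp_apply, zero_add, hdiv]
    simp [div_eq_inv_mul]
  · filter_upwards [eventually_ge_atTop 0] with x hx
    simp [Real.rpow_neg hx]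

theorem tendsto_add_div_add_atTop {𝕜 : Type*} [Field 𝕜] [LinearOrder 𝕜] [IsStrictOrderedRing 𝕜]
    [TopologicalSpace 𝕜] [OrderTopology 𝕜] (a b : 𝕜) :
    Tendsto (fun x : 𝕜 => (x + a) / (x + b)) atTop (𝓝 1) := by
  have hden : Tendsto (fun x : 𝕜 => x + b) atTop atTop :=
    tendsto_atTop_add_const_right _ b tendsto_id
  have hlim : Tendsto (fun x : 𝕜 => 1 + (a - b) / (x + b)) atTop (𝓝 1) := by
    simpa using (hden.const_div_atTop (a - b)).const_add 1
  refine hlim.congr' ?_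
  filter_upwards [hden.eventually_ne_atTop 0] with x hx
  field_simp
  ring

theorem isBigO_one_sub_mul_div_one_sub_mul_sub_one {ι 𝕜 : Type*} [NormedField 𝕜] {l : Filter ι}
    {s : Set 𝕜} (hs : Bornology.IsBounded s) {u : ι → 𝕜} (hu : Tendsto u l (𝓝 0)) (v : ι → 𝕜) :
    (fun p : ι × 𝕜 => (1 - p.2 * v p.1) / (1 - p.2 * u p.1) - 1)
      =O[l ×ˢ 𝓟 s] fun p => v p.1 - u p.1 := by
  have hbdd : (fun p : ι × 𝕜 => p.2) =O[l ×ˢ 𝓟 s] fun _ => (1 : 𝕜) := by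
    obtain ⟨C, hC⟩ := hs.exists_norm_le
    refine .of_bound C (eventually_prod_principal_iff.2 (.of_forall fun _ t ht => ?_))
    simpa using hC t ht
  have hsmall : Tendsto (fun p : ι × 𝕜 => p.2 * u p.1) (l ×ˢ 𝓟 s) (𝓝 0) := by
    refine (hbdd.mul (isBigO_refl (fun p : ι × 𝕜 => u p.1) _)).trans_tendsto ?_
    simpa [Function.comp_def] using hu.comp tendsto_fst
  have hden : Tendsto (fun p : ι × 𝕜 => 1 - p.2 * u p.1) (l ×ˢ 𝓟 s) (𝓝 1) := by
    simpa using hsmall.const_sub 1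
  have hinv := (hden.inv₀ one_ne_zero).isBigO_one 𝕜
  refine ((hbdd.mul hinv).neg_left.mul
    (isBigO_refl (fun p : ι × 𝕜 => v p.1 - u p.1) _)).congr' ?_ (by simp)
  filter_upwards [hden.eventually_ne one_ne_zero] with p hp
  field_simp
  ring

theorem isBigO_one_sub_mul_rpow_div_sub_one {α : ℝ} (hα : 0 < α) (a : ℝ) {I : Set ℝ}
    (hI : Bornology.IsBounded I) :
    (fun p : ℝ × ℝ => (1 - p.2 * (p.1 + a) ^ (-α)) / (1 - p.2 * p.1 ^ (-α)) - 1)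
      =O[atTop ×ˢ 𝓟 I] fun p => p.1 ^ (-1 - α) := by
  have hdiff : (fun x : ℝ => (x + a) ^ (-α) - x ^ (-α)) =O[atTop] fun x => x ^ (-1 - α) := by
    simpa only [neg_sub_comm] using isBigO_add_rpow_sub_rpow a (-α)
  exact (isBigO_one_sub_mul_div_one_sub_mul_sub_one hI (tendsto_rpow_neg_atTop hα)
    fun x => (x + a) ^ (-α)).trans (hdiff.comp_tendsto tendsto_fst)

theorem isBigO_one_sub_mul_rpow_div_mul_rpow_sub {α : ℝ} (hα : 0 < α) (hα₁ : α ≤ 1) (a b c : ℝ)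
    {I : Set ℝ} (hI : Bornology.IsBounded I) :
    (fun p : ℝ × ℝ => (1 - p.2 * (p.1 + a) ^ (-α)) / (1 - p.2 * p.1 ^ (-α)) *
        ((p.1 + b) / (p.1 + c)) ^ α - (1 + α * (b - c) / p.1))
      =O[atTop ×ˢ 𝓟 I] fun p => p.1 ^ (-1 - α) := by
  have hratio : Tendsto (fun x : ℝ => ((x + b) / (x + c)) ^ α) atTop (𝓝 1) := by
    simpa using (tendsto_add_div_add_atTop b c).rpow_const (p := α) (Or.inl one_ne_zero)
  have hsquare : (fun x : ℝ => x ^ (-2 : ℝ)) =O[atTop] fun x => x ^ (-1 - α) :=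
    isBigO_rpow_rpow_atTop_of_le (by linarith)
  have hspectral : (fun p : ℝ × ℝ =>
      ((1 - p.2 * (p.1 + a) ^ (-α)) / (1 - p.2 * p.1 ^ (-α)) - 1) * ((p.1 + b) / (p.1 + c)) ^ α)
        =O[atTop ×ˢ 𝓟 I] fun p => p.1 ^ (-1 - α) := by
    simpa using (isBigO_one_sub_mul_rpow_div_sub_one hα a hI).mul
      ((hratio.isBigO_one ℝ).comp_tendsto tendsto_fst)
  have hweight : (fun p : ℝ × ℝ => ((p.1 + b) / (p.1 + c)) ^ α - (1 + α * (b - c) / p.1))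
      =O[atTop ×ˢ 𝓟 I] fun p => p.1 ^ (-1 - α) :=
    ((isBigO_add_div_add_rpow_sub b c α).trans hsquare).comp_tendsto tendsto_fst
  exact (hspectral.add hweight).congr_left fun p => by ring

theorem jacobiG_jacobiWeight_jacobiDiag_eq (α : ℝ) {c₁ c₂ : ℝ} (hc₁ : c₁ ≠ 0) (hc₂ : c₂ ≠ 0)
    {n : ℕ} (hn : n ≠ 0) (t : ℝ) :
    jacobiG (jacobiWeight α c₁ c₂) (jacobiDiag α) n t =
      (1 - t * (2 * n + 2 : ℝ) ^ (-α)) / (1 - t * (2 * n : ℝ) ^ (-α)) *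
        ((2 * n - 1) / (2 * n + 1) : ℝ) ^ α := by
  have hn₁ : (1 : ℝ) ≤ n := mod_cast Nat.one_le_iff_ne_zero.2 hn
  have hodd : Odd (2 * n - 1) := ⟨n - 1, by omega⟩
  have heven : ¬ Odd (2 * n) := by simp
  have hcast : ((2 * n - 1 : ℕ) : ℝ) = 2 * n - 1 := by
    rw [Nat.cast_pred (by omega)]
    push_cast
    rfl
  have hone_sub {x : ℝ} (hx : 0 < x) : 1 - t * x ^ (-α) = (x ^ α - t) / x ^ α := by
    rw [Real.rpow_neg hx.le, ← div_eq_mul_inv, one_sub_div (Real.rpow_pos_of_pos hx α).ne']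
  calc jacobiG (jacobiWeight α c₁ c₂) (jacobiDiag α) n t
    _ = ((2 * n + 2 : ℝ) ^ α - t) * ((2 * n - 1 : ℝ) ^ α * c₁) * ((2 * n : ℝ) ^ α * c₂) /
          (((2 * n : ℝ) ^ α - t) * ((2 * n + 1 : ℝ) ^ α * c₁) * ((2 * n + 2 : ℝ) ^ α * c₂)) := by
      simp [jacobiG, jacobiWeight, jacobiDiag, hodd, heven, hcast, Nat.odd_add]
    _ = ((2 * n + 2 : ℝ) ^ α - t) / (2 * n + 2 : ℝ) ^ α /
          (((2 * n : ℝ) ^ α - t) / (2 * n : ℝ) ^ α) *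
            ((2 * n - 1 : ℝ) ^ α / (2 * n + 1 : ℝ) ^ α) := by
      field_simp
    _ = _ := by
      rw [hone_sub (by positivity), hone_sub (by positivity),
        Real.div_rpow (by linarith) (by positivity)]

theorem jacobiG_uniform_expansion_general {α c₁ c₂ : ℝ} (hα : α ∈ Set.Ioc 0 1) (hc₁ : c₁ ≠ 0)
    (hc₂ : c₂ ≠ 0) {I : Set ℝ} (hI : Bornology.IsBounded I) :
    OtildeI I
      (fun n t =>
        jacobiG (jacobiWeight α c₁ c₂) (jacobiDiag α) n t - (1 - α / (n : ℝ)))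
      (fun n => (n : ℝ) ^ (-1 - α)) := by
  have hdouble : Tendsto (fun n : ℕ => 2 * (n : ℝ)) atTop atTop :=
    tendsto_natCast_atTop_atTop.const_mul_atTop two_pos
  have hexpansion := (isBigO_one_sub_mul_rpow_div_mul_rpow_sub hα.1 hα.2 2 (-1) 1 hI).comp_tendsto
    (hdouble.prodMap tendsto_id)
  have hscale (n : ℕ) : (2 * n : ℝ) ^ (-1 - α) = 2 ^ (-1 - α) * (n : ℝ) ^ (-1 - α) :=
    Real.mul_rpow zero_le_two n.cast_nonneg
  rw [otildeI_iff_isBigO]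
  refine (hexpansion.congr' ?_ (.of_forall fun p => hscale p.1)).of_const_mul_right
  filter_upwards [tendsto_fst.eventually_ne_atTop 0] with p hp
  simp only [Function.comp_apply, Prod.map_fst, Prod.map_snd, id_eq,
    jacobiG_jacobiWeight_jacobiDiag_eq α hc₁ hc₂ hp]
  ring_nf

/-- Uniform asymptotic expansion `G_n(λ) = 1 − α/n + Õ_I(n^{-1-α})` in the critical
case `|c₁ − c₂| = 1`. -/
theorem jacobiG_uniform_expansion (α c₁ c₂ : ℝ)
    (hα : α ∈ Set.Ioo (1/3 : ℝ) (1/2)) (hc₁ : 0 < c₁) (hc₂ : 0 < c₂)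
    (hcrit : |c₁ - c₂| = 1)
    (I : Set ℝ) (hI : I ⊆ Set.Ioi 0) (hIbdd : Bornology.IsBounded I) :
    OtildeI I
      (fun n t =>
        jacobiG (jacobiWeight α c₁ c₂) (jacobiDiag α) n t - (1 - α / (n : ℝ)))
      (fun n => (n : ℝ) ^ (-1 - α)) :=
  jacobiG_uniform_expansion_general ⟨by linarith [hα.1], by linarith [hα.2]⟩ hc₁.ne' hc₂.ne' hIbdd
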